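/- Let T be an ergodic measure-preserving invertible transformation of a probability space and let (s_{n,i})_{(r_n)} be a dynamical sequence of integers that is weak mixing with respect to T. Then (s_{n,i})_{(r_n)} is ergodic with respect to T, i.e., for every measurable set B, ∫ |(1/r_n)∑_{i<r_n} χ_B∘T^{-s_{n,i}} − μ(B)| dμ → 0. -/

import Mathlib

/-!
Write `f = χ_B - μ(B)` and let `g_n` be the average of `f ∘ T^{s_{n,i}}` over `i < r_n`. Weak
mixing, tested on the sets `{g_n ≥ 0}` and `{g_n ≤ 0}`, implies that `∫ |g_n| → 0`; as `|g_n| ≤ 1`,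
also `∫ g_n² → 0`. Because the iterates of `T` commute, the averaging operator is normal on `L²`:
it and its adjoint, the average over the exponents `-s_{n,i}`, give `f` images of the same `L²`
norm. By Cauchy–Schwarz the averages over `-s_{n,i}` therefore tend to `0` in `L¹`.
-/

open MeasureTheory Filter Finset

/-- Integer iterate of an invertible transformation. -/
noncomputable def iterZ {X : Type*} [MeasurableSpace X] (T : X ≃ᵐ X) (k : ℤ) : X → X :=
  if 0 ≤ k then (⇑T)^[k.toNat] else (⇑T.symm)^[(-k).toNat]

section Integral

variable {X ι : Type*} [MeasurableSpace X] {μ : Measure X}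

open scoped BigOperators in
lemma integral_expect (F : Finset ι) {f : ι → X → ℝ} (hf : ∀ i ∈ F, Integrable (f i) μ) :
    ∫ x, 𝔼 i ∈ F, f i x ∂μ = 𝔼 i ∈ F, ∫ x, f i x ∂μ := by
  simp only [expect_eq_sum_div_card, integral_div, integral_finsetSum F hf]

lemma sq_integral_abs_le_integral_sq [IsProbabilityMeasure μ] {f : X → ℝ} (hf : MemLp f 2 μ) :
    (∫ x, |f x| ∂μ) ^ 2 ≤ ∫ x, f x ^ 2 ∂μ := by
  have h := ProbabilityTheory.variance_nonneg |f| μ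
  rw [ProbabilityTheory.variance_eq_sub hf.abs] at h
  simpa only [Pi.pow_apply, Pi.abs_apply, sq_abs, sub_nonneg] using h

lemma integral_sq_le_integral_abs {f : X → ℝ} (hf : Integrable f μ) (hf_le : ∀ x, |f x| ≤ 1) :
    ∫ x, f x ^ 2 ∂μ ≤ ∫ x, |f x| ∂μ := by
  refine integral_mono_of_nonneg (ae_of_all _ fun x => sq_nonneg (f x)) hf.abs
    (ae_of_all _ fun x => ?_)
  calc f x ^ 2 = |f x| ^ 2 := (sq_abs _).symm
    _ ≤ |f x| := pow_le_of_le_one (abs_nonneg _) (hf_le x) two_ne_zero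

end Integral

section CenteredIndicator

variable {X : Type*} [MeasurableSpace X] {μ : Measure X} {A B : Set X}

/-- The function `χ_B - μ(B)`, the projection of `χ_B` to the functions of mean zero when `μ` is a
probability measure. -/
noncomputable def centeredIndicator (μ : Measure X) (B : Set X) (x : X) : ℝ :=
  B.indicator (fun _ => (1 : ℝ)) x - μ.real B

lemma measurable_centeredIndicator (hB : MeasurableSet B) : Measurable (centeredIndicator μ B) :=
  (measurable_const.indicator hB).sub_const _

lemma integrable_centeredIndicator [IsFiniteMeasure μ] (hB : MeasurableSet B) :
    Integrable (centeredIndicator μ B) μ :=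
  ((integrable_const _).indicator hB).sub (integrable_const _)

lemma abs_centeredIndicator_le_one [IsZeroOrProbabilityMeasure μ] (x : X) :
    |centeredIndicator μ B x| ≤ 1 := by
  have h_nonneg : 0 ≤ μ.real B := measureReal_nonneg
  have h_le : μ.real B ≤ 1 := measureReal_le_one
  by_cases hx : x ∈ B
  · rw [centeredIndicator, Set.indicator_of_mem hx, abs_le]
    constructor <;> linarith
  · rw [centeredIndicator, Set.indicator_of_notMem hx, abs_le]
    constructor <;> linarith

lemma setIntegral_centeredIndicator [IsFiniteMeasure μ] (hB : MeasurableSet B) :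
    ∫ x in A, centeredIndicator μ B x ∂μ = μ.real (A ∩ B) - μ.real A * μ.real B := by
  simp only [centeredIndicator]
  rw [integral_sub ((integrable_const _).indicator hB) (integrable_const _),
    setIntegral_indicator hB, setIntegral_const, setIntegral_const, smul_eq_mul, smul_eq_mul,
    mul_one]

end CenteredIndicator

section OrbitAverage

open scoped BigOperators Pointwise

variable {G X ι : Type*} [VAdd G X]

/-- The average of `f` over the points `t i +ᵥ x`, `i ∈ F`, of the orbit of `x`. It is `0` when `F`
is empty. -/
noncomputable def orbitAverage (F : Finset ι) (t : ι → G) (f : X → ℝ) (x : X) : ℝ :=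
  𝔼 i ∈ F, f (t i +ᵥ x)

lemma abs_orbitAverage_le (F : Finset ι) (t : ι → G) {f : X → ℝ} {C : ℝ} (hf : ∀ x, |f x| ≤ C)
    (x : X) : |orbitAverage F t f x| ≤ C := by
  rcases F.eq_empty_or_nonempty with rfl | hF
  · simpa only [orbitAverage, expect_empty, abs_zero] using (abs_nonneg _).trans (hf x)
  · exact (abs_expect_le _ _).trans (expect_le hF fun i _ => hf (t i +ᵥ x))

variable [MeasurableSpace X] {μ : Measure X} {A B : Set X}

lemma orbitAverage_centeredIndicator {F : Finset ι} (hF : F.Nonempty) (t : ι → G) (x : X) :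
    orbitAverage F t (centeredIndicator μ B) x =
      𝔼 i ∈ F, B.indicator (fun _ => (1 : ℝ)) (t i +ᵥ x) - μ.real B := by
  simp only [orbitAverage, centeredIndicator, expect_sub_distrib, expect_const hF]

/-- The average over `i ∈ F` of the correlation defects `|μ((t i +ᵥ A) ∩ B) - μ(A) μ(B)|`, whose
convergence to `0` is weak mixing. -/
noncomputable def mixingDefect (μ : Measure X) (F : Finset ι) (t : ι → G) (A B : Set X) : ℝ :=
  𝔼 i ∈ F, |μ.real ((t i +ᵥ A) ∩ B) - μ.real A * μ.real B|

variable [MeasurableConstVAdd G X]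

lemma measurable_orbitAverage (F : Finset ι) (t : ι → G) {f : X → ℝ} (hf : Measurable f) :
    Measurable (orbitAverage F t f) := by
  unfold orbitAverage
  simp only [expect_eq_sum_div_card]
  exact (measurable_sum F fun i _ => hf.comp (measurable_const_vadd (t i))).div_const _

variable [VAddInvariantMeasure G X μ]

lemma memLp_comp_vadd {p : ENNReal} {f : X → ℝ} (hf : MemLp f p μ) (g : G) :
    MemLp (fun x => f (g +ᵥ x)) p μ :=
  hf.comp_measurePreserving (measurePreserving_vadd g μ)

lemma memLp_orbitAverage (F : Finset ι) (t : ι → G) {p : ENNReal} {f : X → ℝ} (hf : MemLp f p μ) :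
    MemLp (orbitAverage F t f) p μ := by
  unfold orbitAverage
  simp only [expect_eq_sum_div_card, div_eq_inv_mul]
  exact (memLp_finsetSum F fun i _ => memLp_comp_vadd hf (t i)).const_mul _

lemma integral_sq_orbitAverage (F : Finset ι) (t : ι → G) {f : X → ℝ} (hf : MemLp f 2 μ) :
    ∫ x, orbitAverage F t f x ^ 2 ∂μ =
      𝔼 i ∈ F, 𝔼 j ∈ F, ∫ x, f (t i +ᵥ x) * f (t j +ᵥ x) ∂μ := by
  have h_int (i j : ι) : Integrable (fun x => f (t i +ᵥ x) * f (t j +ᵥ x)) μ :=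
    (memLp_comp_vadd hf (t i)).integrable_mul (memLp_comp_vadd hf (t j))
  have h_int_expect (i : ι) : Integrable (fun x => 𝔼 j ∈ F, f (t i +ᵥ x) * f (t j +ᵥ x)) μ := by
    simp only [← mul_expect]
    exact (memLp_comp_vadd hf (t i)).integrable_mul (memLp_orbitAverage F t hf)
  simp only [orbitAverage, sq, expect_mul_expect]
  rw [integral_expect F fun i _ => h_int_expect i]
  exact expect_congr rfl fun i _ => integral_expect F fun j _ => h_int i j

end OrbitAverage

section AddGroupAction

open scoped Pointwise

variable {G X ι : Type*} [AddGroup G] [AddAction G X] [MeasurableSpace X] [MeasurableConstVAdd G X]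
  {μ : Measure X} [VAddInvariantMeasure G X μ] {A B : Set X}

open scoped BigOperators in
lemma setIntegral_orbitAverage (F : Finset ι) (t : ι → G) {f : X → ℝ} (hf : Integrable f μ) :
    ∫ x in A, orbitAverage F t f x ∂μ = 𝔼 i ∈ F, ∫ x in t i +ᵥ A, f x ∂μ := by
  have h_int (i : ι) : Integrable (fun x => f (t i +ᵥ x)) μ :=
    (measurePreserving_vadd (t i) μ).integrable_comp_of_integrable hf
  simp only [orbitAverage]
  rw [integral_expect F fun i _ => (h_int i).integrableOn]
  exact expect_congr rfl fun i _ => ((measurePreserving_vadd (t i) μ).setIntegral_image_emb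
    (measurableEmbedding_const_vadd (t i)) f A).symm

lemma abs_setIntegral_orbitAverage_centeredIndicator_le [IsFiniteMeasure μ] (F : Finset ι)
    (t : ι → G) (hB : MeasurableSet B) :
    |∫ x in A, orbitAverage F t (centeredIndicator μ B) x ∂μ| ≤ mixingDefect μ F t A B := by
  have h_real (g : G) : μ.real (g +ᵥ A) = μ.real A := by
    rw [measureReal_def, measureReal_def, measure_vadd]
  simp only [setIntegral_orbitAverage F t (integrable_centeredIndicator hB),
    setIntegral_centeredIndicator hB, h_real]
  exact abs_expect_le _ _

lemma integral_abs_orbitAverage_centeredIndicator_le [IsFiniteMeasure μ] (F : Finset ι) (t : ι → G)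
    (hB : MeasurableSet B) :
    ∫ x, |orbitAverage F t (centeredIndicator μ B) x| ∂μ ≤
      mixingDefect μ F t {x | 0 ≤ orbitAverage F t (centeredIndicator μ B) x} B +
        mixingDefect μ F t {x | orbitAverage F t (centeredIndicator μ B) x ≤ 0} B := by
  have hg : Integrable (orbitAverage F t (centeredIndicator μ B)) μ :=
    memLp_one_iff_integrable.1 <| memLp_orbitAverage F t <|
      memLp_one_iff_integrable.2 (integrable_centeredIndicator hB)
  simp only [← Real.norm_eq_abs]
  rw [integral_norm_eq_pos_sub_neg hg]
  exact (le_abs_self _).trans <| (abs_sub _ _).trans <|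
    add_le_add (abs_setIntegral_orbitAverage_centeredIndicator_le F t hB)
      (abs_setIntegral_orbitAverage_centeredIndicator_le F t hB)

end AddGroupAction

section AddCommGroupAction

open scoped BigOperators

variable {G X ι : Type*} [AddCommGroup G] [AddAction G X] [MeasurableSpace X]
  [MeasurableConstVAdd G X] {μ : Measure X} [VAddInvariantMeasure G X μ]

lemma integral_mul_vadd_eq_integral_mul_neg_vadd (f : X → ℝ) (a b : G) :
    ∫ x, f (a +ᵥ x) * f (b +ᵥ x) ∂μ = ∫ x, f (-a +ᵥ x) * f (-b +ᵥ x) ∂μ := by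
  rw [← integral_vadd_eq_self _ (g := -a + -b)]
  refine integral_congr_ae (ae_of_all _ fun x => ?_)
  simp only [vadd_vadd, add_neg_cancel_left, add_neg_cancel_comm_assoc, mul_comm]

lemma integral_sq_orbitAverage_neg (F : Finset ι) (t : ι → G) {f : X → ℝ} (hf : MemLp f 2 μ) :
    ∫ x, orbitAverage F (-t) f x ^ 2 ∂μ = ∫ x, orbitAverage F t f x ^ 2 ∂μ := by
  simp only [integral_sq_orbitAverage F _ hf, integral_mul_vadd_eq_integral_mul_neg_vadd f (t _),
    Pi.neg_apply]

lemma sq_integral_abs_orbitAverage_neg_le [IsProbabilityMeasure μ] (F : Finset ι) (t : ι → G)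
    {f : X → ℝ} (hf : AEStronglyMeasurable f μ) (hf_le : ∀ x, |f x| ≤ 1) :
    (∫ x, |orbitAverage F (-t) f x| ∂μ) ^ 2 ≤ ∫ x, |orbitAverage F t f x| ∂μ := by
  have hf_memLp : MemLp f 2 μ := MemLp.of_bound hf 1 (ae_of_all _ hf_le)
  calc (∫ x, |orbitAverage F (-t) f x| ∂μ) ^ 2
      ≤ ∫ x, orbitAverage F (-t) f x ^ 2 ∂μ :=
        sq_integral_abs_le_integral_sq (memLp_orbitAverage F (-t) hf_memLp)
    _ = ∫ x, orbitAverage F t f x ^ 2 ∂μ := integral_sq_orbitAverage_neg F t hf_memLp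
    _ ≤ ∫ x, |orbitAverage F t f x| ∂μ :=
        integral_sq_le_integral_abs ((memLp_orbitAverage F t hf_memLp).integrable one_le_two)
          (abs_orbitAverage_le F t hf_le)

theorem weak_mixing_dynseq_imp_ergodic_dynseq_general [IsProbabilityMeasure μ] {κ : Type*}
    {l : Filter κ} {F : κ → Finset ι} (hF : ∀ᶠ n in l, (F n).Nonempty) (s : κ → ι → G)
    {B : Set X} (hB : MeasurableSet B)
    (hwm : ∀ A : κ → Set X, (∀ n, MeasurableSet (A n)) →
      Tendsto (fun n => mixingDefect μ (F n) (s n) (A n) B) l (nhds 0)) :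
    Tendsto (fun n =>
        ∫ x, |𝔼 i ∈ F n, B.indicator (fun _ => (1 : ℝ)) (-s n i +ᵥ x) - μ.real B| ∂μ)
      l (nhds 0) := by
  set f := centeredIndicator μ B
  have hf : Measurable f := measurable_centeredIndicator hB
  have hg (n : κ) : Measurable (orbitAverage (F n) (s n) f) := measurable_orbitAverage _ _ hf
  have h_forward : Tendsto (fun n => ∫ x, |orbitAverage (F n) (s n) f x| ∂μ) l (nhds 0) := by
    refine squeeze_zero (fun n => integral_nonneg fun x => abs_nonneg _)
      (fun n => integral_abs_orbitAverage_centeredIndicator_le (F n) (s n) hB) ?_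
    simpa only [add_zero] using
      (hwm _ fun n => measurableSet_le measurable_const (hg n)).add
        (hwm _ fun n => measurableSet_le (hg n) measurable_const)
  have h_backward : Tendsto (fun n => ∫ x, |orbitAverage (F n) (-s n) f x| ∂μ) l (nhds 0) := by
    refine squeeze_zero (fun n => integral_nonneg fun x => abs_nonneg _)
      (fun n => Real.le_sqrt_of_sq_le <| sq_integral_abs_orbitAverage_neg_le (F n) (s n)
        hf.aestronglyMeasurable abs_centeredIndicator_le_one) ?_
    simpa only [Real.sqrt_zero] using h_forward.sqrt
  refine h_backward.congr' ?_
  filter_upwards [hF] with n hn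
  simp only [f, orbitAverage_centeredIndicator hn, Pi.neg_apply]

end AddCommGroupAction

section IterZ

variable {X : Type*} [MeasurableSpace X]

lemma iterZ_eq_zpow (T : X ≃ᵐ X) (k : ℤ) : iterZ T k = ⇑((T.toEquiv : Equiv.Perm X) ^ k) := by
  cases k with
  | ofNat n =>
    rw [Int.ofNat_eq_natCast, iterZ, if_pos n.cast_nonneg, Int.toNat_natCast, zpow_natCast,
      Equiv.Perm.coe_pow]
    rfl
  | negSucc n =>
    rw [iterZ, if_neg (Int.negSucc_lt_zero n).not_ge, Int.neg_negSucc, Int.toNat_natCast,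
      zpow_negSucc, ← inv_pow, Equiv.Perm.coe_pow]
    rfl

/-- The action of `ℤ` on `X` through the iterates of `T`. It is not an instance, as it depends on
`T`. -/
noncomputable abbrev iterZAddAction (T : X ≃ᵐ X) : AddAction ℤ X where
  vadd k x := iterZ T k x
  zero_vadd x := by
    change iterZ T 0 x = x
    rw [iterZ_eq_zpow, zpow_zero, Equiv.Perm.one_apply]
  add_vadd a b x := by
    change iterZ T (a + b) x = iterZ T a (iterZ T b x)
    simp only [iterZ_eq_zpow, zpow_add, Equiv.Perm.mul_apply]

lemma measurePreserving_iterZ {μ : Measure X} {T : X ≃ᵐ X} (hT : MeasurePreserving T μ μ) (k : ℤ) :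
    MeasurePreserving (iterZ T k) μ μ := by
  unfold iterZ
  split_ifs
  · exact hT.iterate _
  · exact (hT.symm T).iterate _

end IterZ

open scoped BigOperators in
lemma one_div_mul_sum_range_eq_expect (r : ℕ) (f : ℕ → ℝ) :
    1 / (r : ℝ) * ∑ i ∈ range r, f i = 𝔼 i ∈ range r, f i := by
  rw [expect_eq_sum_div_card, card_range, one_div_mul_eq_div]

/-- A dynamical sequence of integers that is weak mixing with respect to an ergodic
measure-preserving invertible transformation is ergodic (in the L¹ sense) with respect to it. -/
theorem weak_mixing_dynseq_imp_ergodic_dynseq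
    {X : Type*} [MeasurableSpace X] (μ : Measure X) [IsProbabilityMeasure μ]
    (T : X ≃ᵐ X) (hT : MeasurePreserving T μ μ) (hE : Ergodic (⇑T) μ)
    (r : ℕ → ℕ) (hrtop : Tendsto r atTop atTop)
    (s : ℕ → ℕ → ℤ)
    (hwm : ∀ A : ℕ → Set X, (∀ n, MeasurableSet (A n)) → ∀ B : Set X, MeasurableSet B →
      Tendsto (fun n : ℕ =>
          (1 / (r n : ℝ)) * ∑ i ∈ Finset.range (r n),
            |(μ (iterZ T (s n i) '' A n ∩ B)).toReal - (μ (A n)).toReal * (μ B).toReal|)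
        atTop (nhds 0)) :
    ∀ B : Set X, MeasurableSet B →
      Tendsto (fun n : ℕ =>
          ∫ x, |(1 / (r n : ℝ)) * ∑ i ∈ Finset.range (r n),
              B.indicator (fun _ => (1 : ℝ)) (iterZ T (-(s n i)) x) - (μ B).toReal| ∂μ)
        atTop (nhds 0) := by
  intro B hB
  let := iterZAddAction T
  have : MeasurableConstVAdd ℤ X := ⟨fun k => (measurePreserving_iterZ hT k).measurable⟩
  have : VAddInvariantMeasure ℤ X μ :=
    ⟨fun k _ hA => (measurePreserving_iterZ hT k).measure_preimage hA.nullMeasurableSet⟩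
  have h_nonempty : ∀ᶠ n in atTop, (range (r n)).Nonempty :=
    (hrtop.eventually_ne_atTop 0).mono fun _ => nonempty_range_iff.2
  simp only [one_div_mul_sum_range_eq_expect] at hwm ⊢
  exact weak_mixing_dynseq_imp_ergodic_dynseq_general h_nonempty s hB fun A hA => hwm A hA B hB
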